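/- For every prime p, every nonempty symmetric subset A of 𝔽_p with |A| ≤ 2·log₃(p) has a unique difference. (In the paper's notation: g(p) ≥ 2·log₃(p), where g(p) is the largest number such that every symmetric subset of 𝔽_p with at most g(p) elements has a unique difference.) -/

import Mathlib

open Finset Pointwise

/-- A nonempty subset `A` of `𝔽_p` has a unique difference if there is `x ∈ 𝔽_p`
represented exactly once as an ordered difference `a - b` with `a, b ∈ A`. -/
def HasUniqueDifference {p : ℕ} (A : Finset (ZMod p)) : Prop :=
  ∃ x : ZMod p, ((A ×ˢ A).filter fun ab => ab.1 - ab.2 = x).card = 1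

/-!
If `a ∈ A` and the difference `2a = a - (-a)` is not unique, then `2a = b + c` with `b, c ∈ A` and
`b ≠ a`; suppose this happens for every `a ∈ A`. Cut `A` into maximal progressions of ratio `3`,
choose one from each pair of opposite progressions, and let `e_t` be the unit vector attached to the
last element `t` of a chosen progression. The elements of `A` become vectors `± 3⁻ⁱ e_t` (or `0`),
and the relations for the last elements `t` become vectors `2 e_t - u - v`. Since `3t ∉ A`, neither
`u` nor `v` is `± e_t`, which bounds the norm of these vectors by `√8 < 3`.

After clearing denominators, Hadamard's inequality bounds the determinants formed from the relations
by `3 ^ (|A| / 2) ≤ p`, strictly. Hence a determinant nonzero over `ℝ` is nonzero modulo `p`, and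
every real consequence of the relations holds in the field. But modulo the real span of the
relations, an `e_t` whose image has maximal norm is the midpoint of two vectors of no larger norm,
so strict convexity forces `u = e_t` there, and therefore `b = t` in the field: a contradiction.

Multiplication by `3` has no cycle inside `A`, because a cycle would give `3 ^ n = ± 1` with
`3 ^ n ≤ p`.
-/

/-! ### Determinants and integer relations modulo `p` -/

theorem exists_basis_mem_of_repr_ne_zero {ι K V : Type*} [Field K] [AddCommGroup V] [Module K V]
    (b : Module.Basis ι K V) (s : Set V) :
    ∃ β : Module.Basis ι K V, (∀ i, β i ∈ s ∪ Set.range b) ∧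
      ∀ x ∈ Submodule.span K s, ∀ i, β.repr x i ≠ 0 → β i ∈ s := by
  obtain ⟨t, hts, hspan, ht⟩ := exists_linearIndependent K s
  have hli : LinearIndepOn K id t := ht
  have htop : ⊤ ≤ Submodule.span K (t ∪ Set.range b) :=
    b.span_eq.symm.le.trans (Submodule.span_mono Set.subset_union_right)
  let β₀ := Module.Basis.extendLe hli Set.subset_union_left htop
  let β := β₀.reindex (β₀.indexEquiv b)
  have hrange : Set.range β = Set.range β₀ := β₀.range_reindex _
  refine ⟨β, fun i => ?_, fun x hx i hi => ?_⟩
  · exact Set.union_subset_union_left _ hts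
      (Module.Basis.extendLe_subset hli _ htop (hrange ▸ Set.mem_range_self i))
  · have image_preimage : β '' (β ⁻¹' t) = t :=
      Set.image_preimage_eq_of_subset
        (hrange ▸ Module.Basis.subset_extendLe hli Set.subset_union_left htop)
    rw [← hspan, ← image_preimage, β.mem_span_image] at hx
    exact hts (hx (Finsupp.mem_support_iff.2 hi))

/-- The vector with entries `r i / d i` (read as `0` where `d i = 0`). It brings the coefficient
vectors of the relations under consideration to bounded Euclidean norm, as Hadamard's inequality
requires. -/
noncomputable def rescale {ι : Type*} (d : ι → ℕ) : (ι → ℤ) →+ EuclideanSpace ℝ ι where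
  toFun r := WithLp.toLp 2 fun i => r i / d i
  map_zero' := by ext; simp
  map_add' r s := by ext; simp [add_div]

@[simp]
theorem rescale_apply {ι : Type*} (d : ι → ℕ) (r : ι → ℤ) (i : ι) :
    rescale d r i = r i / d i := rfl

theorem rescale_single {ι : Type*} [DecidableEq ι] (d : ι → ℕ) (i : ι) (x : ℤ) :
    rescale d (Pi.single i x) = ((x : ℝ) / d i) • EuclideanSpace.single i (1 : ℝ) := by
  ext j
  obtain rfl | hj := eq_or_ne j i <;> simp [*]

theorem rescale_single_self {ι : Type*} [DecidableEq ι] {d : ι → ℕ} (hd : ∀ i, d i ≠ 0) (i : ι) :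
    rescale d (Pi.single i (d i : ℤ)) = EuclideanSpace.single i (1 : ℝ) := by
  simp [rescale_single, hd]

theorem abs_intCast_div_natCast_le_one {a : ℤ} {n : ℕ} (h : |a| ≤ n) : |(a / n : ℝ)| ≤ 1 := by
  rw [abs_div, Nat.abs_cast]
  exact div_le_one_of_le₀ (by exact_mod_cast h) n.cast_nonneg

theorem vecMul_eq_of_sum_smul_rescale_eq {ι : Type*} [Fintype ι] {d : ι → ℕ}
    (hd : ∀ i, d i ≠ 0) {N : Matrix ι ι ℤ} {w : ι → ℤ} {c : ι → ℝ}
    (h : ∑ i, c i • rescale d (N i) = rescale d w) :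
    Matrix.vecMul c (N.map (Int.castRingHom ℝ)) = fun i => (w i : ℝ) := by
  ext j
  have hdj : (d j : ℝ) ≠ 0 := Nat.cast_ne_zero.2 (hd j)
  have hj := congrArg (fun v : EuclideanSpace ℝ ι => v j) h
  simp only [WithLp.ofLp_sum, Finset.sum_apply, PiLp.smul_apply, rescale_apply, smul_eq_mul,
    ← mul_div_assoc, ← sum_div] at hj
  exact (div_left_inj' hdj).1 hj

section Determinants

variable {ι : Type*} [Fintype ι] [DecidableEq ι]

theorem abs_det_le_prod_norm {E : Type*} [NormedAddCommGroup E] [InnerProductSpace ℝ E]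
    (b : OrthonormalBasis ι ℝ E) (v : ι → E) : |b.toBasis.det v| ≤ ∏ i, ‖v i‖ := by
  let e := Fintype.equivFin ι
  have : Fact (Module.finrank ℝ E = Fintype.card ι) :=
    ⟨Module.finrank_eq_card_basis b.toBasis⟩
  have h := (b.reindex e).toBasis.orientation.abs_volumeForm_apply_le (v ∘ e.symm)
  rw [Orientation.volumeForm_robust' _ (b.reindex e), OrthonormalBasis.reindex_toBasis,
    Module.Basis.det_reindex, Function.comp_assoc, e.symm_comp_self, Function.comp_id] at h
  exact h.trans_eq (e.symm.prod_comp fun i => ‖v i‖)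

theorem intCast_det_eq_prod_mul_det_rescale {d : ι → ℕ} (hd : ∀ i, d i ≠ 0) (N : Matrix ι ι ℤ) :
    (N.det : ℝ) = (∏ i, (d i : ℝ)) *
      (EuclideanSpace.basisFun ι ℝ).toBasis.det fun i => rescale d (N i) := by
  rw [Module.Basis.det_apply, ← Matrix.det_mul_column, Int.cast_det, ← Matrix.det_transpose]
  congr 1
  ext i j
  simp [Module.Basis.toMatrix_apply, mul_div_cancel₀, hd]

theorem linearCombination_eq_zero_of_vecMul_eq {M : Type*} [AddCommGroup M] (y : ι → M)
    {N : Matrix ι ι ℤ} (hN : ∀ x : M, N.det • x = 0 → x = 0) {w : ι → ℤ} {c : ι → ℝ}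
    (hw : Matrix.vecMul c (N.map (Int.castRingHom ℝ)) = fun i => (w i : ℝ))
    (hc : ∀ i, c i ≠ 0 → Fintype.linearCombination ℤ y (N i) = 0) :
    Fintype.linearCombination ℤ y w = 0 := by
  -- Cramer's rule: `N.det • w` is the combination of the rows of `N` with coefficients `g`.
  let g : ι → ℤ := Matrix.vecMul w N.adjugate
  have g_eq (i : ι) : (g i : ℝ) = N.det * c i := by
    have hg : (Int.castRingHom ℝ) (g i) =
        Matrix.vecMul (fun i => (w i : ℝ)) (N.map (Int.castRingHom ℝ)).adjugate i := by
      rw [RingHom.map_vecMul, ← RingHom.mapMatrix_apply, RingHom.map_adjugate]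
      rfl
    have hdet : (N.map (Int.castRingHom ℝ)).det = N.det := (Int.cast_det N).symm
    rw [← hw, Matrix.vecMul_vecMul, Matrix.mul_adjugate, hdet, Matrix.vecMul_smul,
      Matrix.vecMul_one] at hg
    exact hg
  have sum_g : ∑ i, g i • N i = N.det • w := by
    rw [← Matrix.vecMul_eq_sum, Matrix.vecMul_vecMul, Matrix.adjugate_mul, Matrix.vecMul_smul,
      Matrix.vecMul_one]
  apply hN
  rw [← map_smul, ← sum_g, map_sum]
  refine sum_eq_zero fun i _ => ?_
  rw [map_smul]
  by_cases hi : c i = 0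
  · have : g i = 0 := by simpa [hi] using g_eq i
    rw [this, zero_smul]
  · rw [hc i hi, smul_zero]

theorem intCast_det_ne_zero {F : Type*} [Field F] (p : ℕ) [CharP F p] {d : ι → ℕ}
    (hd : ∀ i, d i ≠ 0) {C : ℝ} (hp : C ^ Fintype.card ι * ∏ i, (d i : ℝ) < p) {N : Matrix ι ι ℤ}
    {β : Module.Basis ι ℝ (EuclideanSpace ℝ ι)}
    (hβ : ∀ i, rescale d (N i) = β i) (hC : ∀ i, ‖β i‖ ≤ C) : (N.det : F) ≠ 0 := by
  have prod_pos : 0 < ∏ i, (d i : ℝ) := by exact_mod_cast prod_pos fun i _ => (hd i).pos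
  have det_eq := intCast_det_eq_prod_mul_det_rescale hd N
  simp only [hβ] at det_eq
  have det_ne : N.det ≠ 0 := by
    rw [← Int.cast_ne_zero (α := ℝ), det_eq]
    exact mul_ne_zero prod_pos.ne' (Module.Basis.isUnit_det _ β).ne_zero
  have abs_det_lt : |(N.det : ℝ)| < p := calc
    |(N.det : ℝ)| = (∏ i, (d i : ℝ)) * |(EuclideanSpace.basisFun ι ℝ).toBasis.det β| := by
      rw [det_eq, abs_mul, abs_of_pos prod_pos]
    _ ≤ (∏ i, (d i : ℝ)) * ∏ i, ‖β i‖ := by gcongr; exact abs_det_le_prod_norm _ β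
    _ ≤ (∏ i, (d i : ℝ)) * ∏ _i : ι, C := by gcongr; exact hC _
    _ < p := by rwa [prod_const, card_univ, mul_comm]
  intro h
  exact det_ne (Int.eq_zero_of_abs_lt_dvd ((CharP.intCast_eq_zero_iff F p _).1 h)
    (by exact_mod_cast abs_det_lt))

end Determinants

theorem linearCombination_eq_zero_of_rescale_mem_span {ι F : Type*} [Fintype ι] [Field F] (p : ℕ)
    [CharP F p] {d : ι → ℕ} (hd : ∀ i, d i ≠ 0) {C : ℝ} (hC : 1 ≤ C)
    (hp : C ^ Fintype.card ι * ∏ i, (d i : ℝ) < p) (y : ι → F) {R : Set (ι → ℤ)}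
    (norm_le : ∀ r ∈ R, ‖rescale d r‖ ≤ C)
    (eval_eq_zero : ∀ r ∈ R, Fintype.linearCombination ℤ y r = 0) {w : ι → ℤ}
    (hw : rescale d w ∈ Submodule.span ℝ (rescale d '' R)) :
    Fintype.linearCombination ℤ y w = 0 := by
  classical
  obtain ⟨β, hβ, β_mem⟩ :=
    exists_basis_mem_of_repr_ne_zero (EuclideanSpace.basisFun ι ℝ).toBasis (rescale d '' R)
  have lift (i : ι) : ∃ z : ι → ℤ, rescale d z = β i ∧ ‖β i‖ ≤ C ∧
      (β i ∈ rescale d '' R → z ∈ R) := by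
    by_cases hi : β i ∈ rescale d '' R
    · obtain ⟨r, hr, hri⟩ := hi
      exact ⟨r, hri, hri ▸ norm_le r hr, fun _ => hr⟩
    · obtain ⟨j, hj⟩ := (hβ i).resolve_left hi
      refine ⟨Pi.single j (d j), ?_, ?_, fun h => absurd h hi⟩
      · simp [← hj, rescale_single_self hd]
      · simpa [← hj] using hC
  choose N hNβ norm_β N_mem using lift
  have det_ne : ((Matrix.of N).det : F) ≠ 0 := intCast_det_ne_zero p hd hp hNβ norm_β
  have hwN : ∑ i, β.repr (rescale d w) i • rescale d (N i) = rescale d w := by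
    simp only [hNβ, β.sum_repr]
  refine linearCombination_eq_zero_of_vecMul_eq y (fun x hx => ?_)
    (vecMul_eq_of_sum_smul_rescale_eq hd hwN)
    fun i hi => eval_eq_zero _ (N_mem i (β_mem _ hw i hi))
  rw [zsmul_eq_mul] at hx
  exact (mul_eq_zero.1 hx).resolve_left det_ne

theorem norm_two_smul_sub_sub_le_sqrt_eight {ι E : Type*} [NormedAddCommGroup E]
    [InnerProductSpace ℝ E] {e : ι → E} (he : Orthonormal ℝ e) {i j k : ι} {α γ : ℝ}
    (hα : |α| ≤ 1) (hα' : j = i → |α| ≤ 1 / 3) (hγ : |γ| ≤ 1) (hγ' : k = i → |γ| ≤ 1 / 3) :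
    ‖(2 : ℝ) • e i - α • e j - γ • e k‖ ≤ √8 := by
  classical
  apply Real.le_sqrt_of_sq_le
  have h : ‖(2 : ℝ) • e i - α • e j - γ • e k‖ ^ 2 = 4 + α ^ 2 + γ ^ 2
      - 4 * α * (if i = j then 1 else 0) - 4 * γ * (if i = k then 1 else 0)
      + 2 * α * γ * (if j = k then 1 else 0) := by
    rw [norm_sub_sq_real, norm_sub_sq_real]
    simp only [norm_smul, inner_sub_left, real_inner_smul_left, real_inner_smul_right, he.1,
      orthonormal_iff_ite.1 he, Real.norm_eq_abs, mul_one, sq_abs]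
    ring
  rw [h]
  simp only [abs_le] at hα hα' hγ hγ'
  obtain rfl | hj := eq_or_ne j i
  · obtain ⟨hα_lower, hα_upper⟩ := hα' rfl
    obtain rfl | hk := eq_or_ne k j
    · obtain ⟨hγ_lower, hγ_upper⟩ := hγ' rfl
      simp only [if_true]
      nlinarith [hα_upper, hγ_upper]
    · simp only [if_true, if_neg hk.symm]
      nlinarith [hα_upper]
  · obtain rfl | hk := eq_or_ne k i
    · obtain ⟨hγ_lower, hγ_upper⟩ := hγ' rfl
      simp only [if_true, if_neg hj, if_neg hj.symm]
      nlinarith [hγ_upper]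
    · simp only [if_neg hj.symm, if_neg hk.symm]
      split_ifs <;> nlinarith

theorem exists_eq_of_two_smul_eq_add {ι E : Type*} [Finite ι] [Nonempty ι]
    [NormedAddCommGroup E] [NormedSpace ℝ E] [StrictConvexSpace ℝ E] {f u v : ι → E}
    (hu : ∀ t, ∃ s, ‖u t‖ ≤ ‖f s‖) (hv : ∀ t, ∃ s, ‖v t‖ ≤ ‖f s‖)
    (h : ∀ t, (2 : ℝ) • f t = u t + v t) : ∃ t, u t = f t := by
  obtain ⟨t, ht⟩ := Finite.exists_max fun t => ‖f t‖
  obtain ⟨s, hs⟩ := hu t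
  obtain ⟨s', hs'⟩ := hv t
  have norm_add : ‖u t + v t‖ = 2 * ‖f t‖ := by rw [← h, norm_smul, Real.norm_ofNat]
  have triangle := norm_add_le (u t) (v t)
  have norm_u := hs.trans (ht s)
  have norm_v := hs'.trans (ht s')
  have huv : u t = v t := eq_of_norm_eq_of_norm_add_eq (by linarith) (by linarith)
  refine ⟨t, smul_right_injective E (two_ne_zero (α := ℝ)) ?_⟩
  simp only [h, ← huv, two_smul]

theorem exists_linearCombination_eq_of_norm_rescale_le {ι κ F : Type*} [Fintype ι] [Finite κ]
    [Nonempty κ] [Field F] (p : ℕ) [CharP F p] {d : ι → ℕ} (hd : ∀ i, d i ≠ 0) {C : ℝ}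
    (hC : 1 ≤ C) (hp : C ^ Fintype.card ι * ∏ i, (d i : ℝ) < p) (y : ι → F) {a u v : κ → ι → ℤ}
    (norm_le : ∀ t, ‖rescale d (2 • a t - u t - v t)‖ ≤ C)
    (eval_eq_zero : ∀ t, Fintype.linearCombination ℤ y (2 • a t - u t - v t) = 0)
    (hu : ∀ t, ∃ s, ∃ α : ℝ, |α| ≤ 1 ∧ rescale d (u t) = α • rescale d (a s))
    (hv : ∀ t, ∃ s, ∃ γ : ℝ, |γ| ≤ 1 ∧ rescale d (v t) = γ • rescale d (a s)) :
    ∃ t, Fintype.linearCombination ℤ y (u t) = Fintype.linearCombination ℤ y (a t) := by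
  -- Modulo the real span of the relations, the `a t` of largest norm is the midpoint of two vectors
  -- of at most the same norm, so it equals both of them.
  let R : Set (ι → ℤ) := Set.range fun t => 2 • a t - u t - v t
  let S : Submodule ℝ (EuclideanSpace ℝ ι) := Submodule.span ℝ (rescale d '' R)
  let P := Sᗮ.starProjection
  have P_eq_zero_iff (x : EuclideanSpace ℝ ι) : P x = 0 ↔ x ∈ S := by
    rw [Submodule.starProjection_apply_eq_zero_iff, Submodule.orthogonal_orthogonal]
  have norm_P_le {x : EuclideanSpace ℝ ι}
      (hx : ∃ s, ∃ α : ℝ, |α| ≤ 1 ∧ x = α • rescale d (a s)) :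
      ∃ s, ‖P x‖ ≤ ‖P (rescale d (a s))‖ := by
    obtain ⟨s, α, hα, rfl⟩ := hx
    refine ⟨s, ?_⟩
    rw [map_smul, norm_smul]
    exact mul_le_of_le_one_left (norm_nonneg _) hα
  obtain ⟨t, ht⟩ : ∃ t, P (rescale d (u t)) = P (rescale d (a t)) := by
    refine exists_eq_of_two_smul_eq_add (fun t => norm_P_le (hu t)) (fun t => norm_P_le (hv t))
      fun t => ?_
    have hr := (P_eq_zero_iff _).2 (Submodule.subset_span ⟨_, Set.mem_range_self t, rfl⟩)
    rwa [map_sub, map_sub, map_sub, map_sub, sub_sub, sub_eq_zero, map_nsmul, map_nsmul,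
      ← ofNat_smul_eq_nsmul ℝ] at hr
  have mem_span : rescale d (u t - a t) ∈ S := by
    rw [← P_eq_zero_iff, map_sub, map_sub, ht, sub_self]
  refine ⟨t, sub_eq_zero.1 ?_⟩
  rw [← map_sub]
  exact linearCombination_eq_zero_of_rescale_mem_span p hd hC hp y
    (Set.forall_mem_range.2 norm_le) (Set.forall_mem_range.2 eval_eq_zero) mem_span

theorem norm_rescale_two_smul_single_sub_le {ι : Type*} [Fintype ι] [DecidableEq ι] {d : ι → ℕ}
    (hd : ∀ i, d i ≠ 0) {t j k : ι} {x z : ℤ}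
    (hx : |x| ≤ d j) (hx' : j = t → 3 * |x| ≤ d j)
    (hz : |z| ≤ d k) (hz' : k = t → 3 * |z| ≤ d k) :
    ‖rescale d (2 • Pi.single t (d t : ℤ) - Pi.single j x - Pi.single k z)‖ ≤ √8 := by
  have abs_le_third {a : ℤ} {i : ι} (ha : 3 * |a| ≤ d i) : |(a / d i : ℝ)| ≤ 1 / 3 := by
    have hdi : (0 : ℝ) < d i := Nat.cast_pos.2 (hd i).pos
    have : 3 * |(a : ℝ)| ≤ d i := by exact_mod_cast ha
    rw [abs_div, Nat.abs_cast, div_le_iff₀ hdi]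
    linarith
  rw [map_sub, map_sub, map_nsmul, rescale_single_self hd, rescale_single, rescale_single,
    ← ofNat_smul_eq_nsmul ℝ]
  exact norm_two_smul_sub_sub_le_sqrt_eight (e := fun i => EuclideanSpace.single i (1 : ℝ))
    EuclideanSpace.orthonormal_single
    (abs_intCast_div_natCast_le_one hx) (fun h => abs_le_third (hx' h))
    (abs_intCast_div_natCast_le_one hz) (fun h => abs_le_third (hz' h))

theorem exists_mul_eq_of_two_mul_eq_add {ι F : Type*} [Fintype ι] [Nonempty ι] [Field F]
    (p : ℕ) [CharP F p] {d : ι → ℕ} (hd : ∀ i, d i ≠ 0) (hp : 3 ^ Fintype.card ι * ∏ i, d i ≤ p)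
    (y : ι → F) {j k : ι → ι} {x z : ι → ℤ}
    (hx : ∀ t, |x t| ≤ d (j t)) (hx' : ∀ t, j t = t → 3 * |x t| ≤ d (j t))
    (hz : ∀ t, |z t| ≤ d (k t)) (hz' : ∀ t, k t = t → 3 * |z t| ≤ d (k t))
    (h : ∀ t, 2 * (d t * y t) = x t * y (j t) + z t * y (k t)) :
    ∃ t, x t * y (j t) = d t * y t := by
  classical
  have sqrt_lt : √8 < 3 := by rw [Real.sqrt_lt' three_pos]; norm_num
  have bound : √8 ^ Fintype.card ι * ∏ i, (d i : ℝ) < p := calc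
    _ < 3 ^ Fintype.card ι * ∏ i, (d i : ℝ) := by
      gcongr
      · exact prod_pos fun i _ => Nat.cast_pos.2 (hd i).pos
    _ ≤ p := by exact_mod_cast hp
  have rescale_single_eq (i : ι) (m : ℤ) : rescale d (Pi.single i m) =
      (m / d i : ℝ) • rescale d (Pi.single i (d i : ℤ)) := by
    rw [rescale_single_self hd, rescale_single]
  obtain ⟨t, ht⟩ := exists_linearCombination_eq_of_norm_rescale_le p hd
    (Real.one_le_sqrt.2 (by norm_num)) bound y
    (fun t => norm_rescale_two_smul_single_sub_le hd (hx t) (hx' t) (hz t) (hz' t))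
    (fun t => by
      rw [map_sub, map_sub, map_nsmul, two_nsmul]
      simp [Fintype.linearCombination_apply_single, ← two_mul, h])
    (fun t => ⟨j t, _, abs_intCast_div_natCast_le_one (hx t), rescale_single_eq _ _⟩)
    (fun t => ⟨k t, _, abs_intCast_div_natCast_le_one (hz t), rescale_single_eq _ _⟩)
  exact ⟨t, by simpa [Fintype.linearCombination_apply_single] using ht⟩

/-! ### Progressions of ratio `g` in a symmetric set -/

theorem neg_mem_iff_of_eq_neg {G : Type*} [DecidableEq G] [InvolutiveNeg G] {A : Finset G}
    (hsym : A = -A) {a : G} : -a ∈ A ↔ a ∈ A := by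
  rw [← mem_neg', ← hsym]

theorem ne_neg_of_ne_zero {F : Type*} [Field F] (h2 : (2 : F) ≠ 0) {x : F} (hx : x ≠ 0) :
    x ≠ -x := fun hxx => mul_ne_zero h2 hx (by linear_combination hxx)

theorem exists_disjoint_neg_union_neg_eq {G : Type*} [DecidableEq G] [InvolutiveNeg G]
    {T : Finset G} (hsym : T = -T) (hne : ∀ x ∈ T, x ≠ -x) :
    ∃ H, Disjoint H (-H) ∧ H ∪ -H = T := by
  classical
  refine ⟨{x ∈ T | WellOrderingRel x (-x)}, disjoint_left.2 fun x hx hx' => ?_, ?_⟩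
  · rw [mem_neg', mem_filter, neg_neg] at hx'
    exact asymm (mem_filter.1 hx).2 hx'.2
  · ext x
    simp only [mem_union, mem_filter, mem_neg', neg_neg, neg_mem_iff_of_eq_neg hsym, ← and_or_left,
      and_iff_left_iff_imp]
    exact fun hx => (trichotomous_of WellOrderingRel x (-x)).imp_right fun h =>
      h.resolve_left (hne x hx)

theorem sum_union_neg_eq_two_mul {G : Type*} [DecidableEq G] [InvolutiveNeg G] {H : Finset G}
    (hH : Disjoint H (-H)) {f : G → ℕ} (hf : ∀ x, f (-x) = f x) :
    ∑ x ∈ H ∪ -H, f x = 2 * ∑ x ∈ H, f x := by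
  rw [sum_union hH, sum_neg_index, two_mul]
  simp only [hf]

theorem pow_card_eq_one_of_mul_mem {G₀ : Type*} [CommGroupWithZero G₀] {S : Finset G₀}
    (hS : 0 ∉ S) {g : G₀} (hg : g ≠ 0) (h : ∀ x ∈ S, g * x ∈ S) : g ^ #S = 1 := by
  classical
  -- Multiplication by `g` permutes `S`, so it leaves the product of the elements unchanged.
  have image_eq : S.image (g * ·) = S :=
    eq_of_subset_of_card_le (image_subset_iff.2 h)
      (card_image_of_injective S (mul_right_injective₀ hg)).ge
  have prod_ne : ∏ x ∈ S, x ≠ 0 := prod_ne_zero_iff.2 fun x hx => ne_of_mem_of_not_mem hx hS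
  apply mul_right_cancel₀ prod_ne
  conv_rhs => rw [one_mul, ← image_eq, prod_image (mul_right_injective₀ hg).injOn]
  rw [prod_mul_distrib, prod_const]

section Runs

variable {F : Type*} [Field F] {A : Finset F} {g a : F}

/-- The number of initial terms of the progression `a, g * a, g ^ 2 * a, …` lying in `A`, and the
junk value `0` if the whole progression does. -/
noncomputable def runLength (A : Finset F) (g a : F) : ℕ :=
  sInf {k | g ^ k * a ∉ A}

theorem pow_mul_mem_of_lt_runLength {k : ℕ} (hk : k < runLength A g a) : g ^ k * a ∈ A :=
  not_not.1 (Nat.notMem_of_lt_sInf hk)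

theorem pow_runLength_mul_notMem (h : ∃ k : ℕ, g ^ k * a ∉ A) : g ^ runLength A g a * a ∉ A :=
  Nat.sInf_mem h

/-- Every progression `a, g * a, g ^ 2 * a, …` with `a ≠ 0` leaves `A`, so that `runLength A g a`
is meaningful. -/
def RunsEnd (A : Finset F) (g : F) : Prop :=
  ∀ a ≠ 0, ∃ k : ℕ, g ^ k * a ∉ A

theorem runLength_pos (ha : a ∈ A) (h : ∃ k : ℕ, g ^ k * a ∉ A) : 0 < runLength A g a := by
  refine Nat.pos_of_ne_zero fun h0 => pow_runLength_mul_notMem h ?_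
  simpa [h0] using ha

variable [DecidableEq F]

theorem exists_pow_eq_one_or_neg_one_of_forall_pow_mul_mem (h2 : (2 : F) ≠ 0) (hsym : A = -A)
    (hg : g ≠ 0) (ha : a ≠ 0) (h : ∀ k : ℕ, g ^ k * a ∈ A) :
    ∃ n, 0 < n ∧ 2 * n ≤ #A ∧ (g ^ n = 1 ∨ g ^ n = -1) := by
  classical
  let S : Finset F := {x ∈ A | x ≠ 0 ∧ ∀ k : ℕ, g ^ k * x ∈ A}
  have S_symm : S = -S := by
    ext x
    simp only [S, mem_neg', mem_filter, mul_neg, neg_mem_iff_of_eq_neg hsym, neg_ne_zero]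
  obtain ⟨H, hH, H_union⟩ := exists_disjoint_neg_union_neg_eq S_symm fun x hx =>
    ne_neg_of_ne_zero h2 (mem_filter.1 hx).2.1
  have card_S : #S = 2 * #H := by
    simpa [H_union] using sum_union_neg_eq_two_mul hH (f := fun _ => 1) fun _ => rfl
  have a_mem : a ∈ S := mem_filter.2 ⟨by simpa using h 0, ha, h⟩
  have S_pos : 0 < #S := card_pos.2 ⟨a, a_mem⟩
  have pow_eq : g ^ #S = 1 := by
    refine pow_card_eq_one_of_mul_mem (by simp [S]) hg fun x hx => ?_
    obtain ⟨-, hx0, hx⟩ := mem_filter.1 hx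
    refine mem_filter.2 ⟨by simpa using hx 1, mul_ne_zero hg hx0, fun k => ?_⟩
    rw [← mul_assoc, ← pow_succ]
    exact hx _
  rw [card_S, mul_comm, pow_mul, sq_eq_one_iff] at pow_eq
  exact ⟨#H, by lia, card_S ▸ card_filter_le _ _, pow_eq⟩

theorem runLength_neg (hsym : A = -A) : runLength A g (-a) = runLength A g a := by
  simp only [runLength, mul_neg, neg_mem_iff_of_eq_neg hsym]

/-- The last elements of the maximal progressions of ratio `g` in `A`. -/
def runTops (A : Finset F) (g : F) : Finset F :=
  {a ∈ A | g * a ∉ A}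

theorem runTops_eq_neg (hsym : A = -A) : runTops A g = -runTops A g := by
  ext x
  simp only [runTops, mem_neg', mem_filter, mul_neg, neg_mem_iff_of_eq_neg hsym]

theorem ne_zero_of_mem_runTops (ha : a ∈ runTops A g) : a ≠ 0 := by
  rintro rfl
  simp [runTops] at ha

theorem exists_mem_runTops_eq_pow_mul (hg : g ≠ 0) (hends : RunsEnd A g)
    (hends' : RunsEnd A g⁻¹) (ha : a ∈ A) (ha0 : a ≠ 0) :
    ∃ t ∈ runTops A g, ∃ i < runLength A g⁻¹ t, t = g ^ i * a := by
  have notMem := pow_runLength_mul_notMem (hends a ha0)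
  obtain ⟨i, hi⟩ := Nat.exists_eq_add_of_le' (runLength_pos ha (hends a ha0))
  rw [hi, pow_succ', mul_assoc] at notMem
  have pow_mem {k : ℕ} (hk : k ≤ i) : g ^ k * a ∈ A := pow_mul_mem_of_lt_runLength (by lia)
  refine ⟨g ^ i * a, mem_filter.2 ⟨pow_mem le_rfl, notMem⟩, i, ?_, rfl⟩
  by_contra! hle
  apply pow_runLength_mul_notMem (hends' _ (mul_ne_zero (pow_ne_zero i hg) ha0))
  rw [inv_pow, ← mul_assoc, mul_comm _ (g ^ i), ← pow_sub₀ g hg hle]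
  exact pow_mem (Nat.sub_le _ _)

theorem sum_runLength_le_card (hg : g ≠ 0) : ∑ t ∈ runTops A g, runLength A g⁻¹ t ≤ #A := by
  let runs := (runTops A g).sigma fun t => range (runLength A g⁻¹ t)
  have mem_A (q : (_ : F) × ℕ) (hq : q ∈ runs) {k : ℕ} (hk : k ≤ q.2) : g⁻¹ ^ k * q.1 ∈ A :=
    pow_mul_mem_of_lt_runLength (hk.trans_lt (mem_range.1 (mem_sigma.1 hq).2))
  have snd_le (q r : (_ : F) × ℕ) (hq : q ∈ runs) (hr : r ∈ runs)
      (hqr : g⁻¹ ^ q.2 * q.1 = g⁻¹ ^ r.2 * r.1) : r.2 ≤ q.2 := by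
    by_contra! hlt
    obtain ⟨k, hk⟩ := Nat.exists_eq_add_of_lt hlt
    have mul_eq : g * q.1 = g⁻¹ ^ k * r.1 := by
      rw [hk, add_assoc, pow_add, mul_assoc] at hqr
      rw [mul_left_cancel₀ (pow_ne_zero _ (inv_ne_zero hg)) hqr, pow_succ', ← mul_assoc,
        mul_inv_cancel_left₀ hg]
    exact (mem_filter.1 (mem_sigma.1 hq).1).2 (mul_eq ▸ mem_A r hr (by lia))
  have inj : Set.InjOn (fun q : (_ : F) × ℕ => g⁻¹ ^ q.2 * q.1) runs := by
    rintro ⟨s, i⟩ hq ⟨t, j⟩ hr hqr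
    obtain rfl : i = j :=
      le_antisymm (snd_le _ _ hr hq hqr.symm) (snd_le _ _ hq hr hqr)
    obtain rfl : s = t := mul_left_cancel₀ (pow_ne_zero i (inv_ne_zero hg)) hqr
    rfl
  calc ∑ t ∈ runTops A g, runLength A g⁻¹ t = #runs := by simp [runs, card_sigma]
    _ ≤ #A := card_le_card_of_injOn _ (fun q hq => mem_A q hq le_rfl) inj

end Runs

/-! ### Midpoints in small symmetric sets -/

theorem pow_le_of_two_mul_le {b m n p : ℕ} (hb : 0 < b) (hmn : 2 * n ≤ m) (h : b ^ m ≤ p ^ 2) :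
    b ^ n ≤ p := by
  rw [← pow_le_pow_iff_left₀ (Nat.zero_le _) (Nat.zero_le _) two_ne_zero, ← pow_mul, mul_comm]
  exact (Nat.pow_le_pow_right hb hmn).trans h

theorem three_pow_ne_one {F : Type*} [Field F] {p n : ℕ} [CharP F p] (hn : 0 < n)
    (h : 3 ^ n ≤ p) : (3 : F) ^ n ≠ 1 := by
  intro h1
  have hdvd : p ∣ 3 ^ n - 1 := by
    rw [← CharP.cast_eq_zero_iff F p, Nat.cast_pred (by positivity)]
    simp [h1]
  have one_lt_pow := Nat.one_lt_pow hn.ne' (by norm_num : 1 < 3)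
  have le_pow_sub_one := Nat.le_of_dvd (by lia) hdvd
  lia

theorem three_pow_ne_neg_one {F : Type*} [Field F] {p n : ℕ} [CharP F p] (hp : p.Prime)
    (hn : 0 < n) (h : 3 ^ n ≤ p) : (3 : F) ^ n ≠ -1 := by
  intro h1
  have hdvd : p ∣ 3 ^ n + 1 := by
    rw [← CharP.cast_eq_zero_iff F p]
    simp [h1]
  have one_lt_pow := Nat.one_lt_pow hn.ne' (by norm_num : 1 < 3)
  obtain rfl : p = 3 ^ n + 1 := by
    obtain ⟨_ | _ | c, hc⟩ := hdvd
    · lia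
    · lia
    · nlinarith
  have even : Even (3 ^ n + 1) := (Odd.pow (by decide)).add_one
  have eq_two := hp.even_iff.1 even
  lia

theorem two_lt_card_of_forall_exists_add_eq_two_mul {F : Type*} [Field F] {A : Finset F}
    (h2 : (2 : F) ≠ 0) (hA : A.Nonempty)
    (hmid : ∀ a ∈ A, ∃ b ∈ A, ∃ c ∈ A, b + c = 2 * a ∧ b ≠ a) : 2 < #A := by
  classical
  obtain ⟨a, ha⟩ := hA
  obtain ⟨b, hb, c, hc, hbc, hba⟩ := hmid a ha
  refine two_lt_card.2 ⟨a, ha, b, hb, c, hc, hba.symm, ?_, ?_⟩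
  · rintro rfl
    exact hba (by linear_combination hbc)
  · rintro rfl
    exact hba (mul_left_cancel₀ h2 (by linear_combination hbc))

theorem five_le_of_forall_exists_add_eq_two_mul {F : Type*} [Field F] {A : Finset F} {p : ℕ}
    [CharP F p] (hp : p.Prime) (hA : A.Nonempty) (hcard : 3 ^ #A ≤ p ^ 2)
    (hmid : ∀ a ∈ A, ∃ b ∈ A, ∃ c ∈ A, b + c = 2 * a ∧ b ≠ a) : 5 ≤ p := by
  classical
  have one_lt_card : 1 < #A := by
    obtain ⟨a, ha⟩ := hA
    obtain ⟨b, hb, -, -, -, hba⟩ := hmid a ha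
    exact one_lt_card.2 ⟨b, hb, a, ha, hba⟩
  have three_le : 3 ≤ p := by
    have pow_two_le := (Nat.pow_le_pow_right three_pos one_lt_card).trans hcard
    nlinarith
  have h2 : (2 : F) ≠ 0 := CharP.cast_ne_zero_of_ne_of_prime F Nat.prime_two (by lia)
  have pow_three_le := (Nat.pow_le_pow_right three_pos
    (two_lt_card_of_forall_exists_add_eq_two_mul h2 hA hmid)).trans hcard
  have ne_four : p ≠ 4 := by
    rintro rfl
    norm_num at hp
  by_contra! hlt
  obtain rfl : p = 3 := by lia
  norm_num at pow_three_le

section Three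

variable {F : Type*} [Field F] {A H : Finset F} {g b t : F}

/-- The largest power of `3` by which `t` can be divided without leaving `A`, when `t` is the last
element of a maximal progression of ratio `3`; such a progression then consists of the elements
`x * (t / runScale A t)` with `x` a power of `3` dividing `runScale A t`. -/
noncomputable def runScale (A : Finset F) (t : F) : ℕ :=
  3 ^ (runLength A 3⁻¹ t - 1)

theorem natCast_runScale_ne_zero (h3 : (3 : F) ≠ 0) : (runScale A t : F) ≠ 0 := by
  simpa [runScale] using pow_ne_zero _ h3

variable [DecidableEq F]

theorem runsEnd_of_eq_three_or_eq_inv {p : ℕ} [CharP F p] (hp : p.Prime) (h2 : (2 : F) ≠ 0)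
    (h3 : (3 : F) ≠ 0) (hsym : A = -A) (hcard : 3 ^ #A ≤ p ^ 2) (hg : g = 3 ∨ g = 3⁻¹) :
    RunsEnd A g := by
  intro a ha
  by_contra! h
  have hg0 : g ≠ 0 := by rcases hg with rfl | rfl <;> simpa
  obtain ⟨n, hn, hnA, hgn⟩ :=
    exists_pow_eq_one_or_neg_one_of_forall_pow_mul_mem h2 hsym hg0 ha h
  have pow_le : 3 ^ n ≤ p := pow_le_of_two_mul_le three_pos hnA hcard
  have three_pow_eq : (3 : F) ^ n = 1 ∨ (3 : F) ^ n = -1 := by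
    rcases hg with rfl | rfl
    · exact hgn
    · simpa [inv_eq_iff_eq_inv, inv_neg] using hgn
  exact three_pow_eq.elim (three_pow_ne_one hn pow_le) (three_pow_ne_neg_one hp hn pow_le)

theorem runScale_neg (hsym : A = -A) : runScale A (-t) = runScale A t := by
  rw [runScale, runScale, runLength_neg hsym]

theorem exists_mem_runTops_intCast_mul_eq (h3 : (3 : F) ≠ 0)
    (hends : RunsEnd A 3) (hends' : RunsEnd A 3⁻¹) (hb : b ∈ A) (hb0 : b ≠ 0) :
    ∃ t ∈ runTops A 3, ∃ x : ℤ, x * (t / runScale A t) = b ∧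
      |x| ≤ runScale A t ∧ (b ≠ t → 3 * |x| ≤ runScale A t) := by
  obtain ⟨t, ht, i, hi, htb⟩ := exists_mem_runTops_eq_pow_mul h3 hends hends' hb hb0
  obtain ⟨m, hm⟩ := Nat.exists_eq_add_of_lt hi
  refine ⟨t, ht, 3 ^ m, ?_⟩
  rw [runScale, hm, Nat.add_sub_cancel]
  push_cast
  refine ⟨?_, ?_, fun hbt => ?_⟩
  · rw [htb]
    field_simp
    ring
  · rw [abs_of_nonneg (by positivity)]
    exact pow_le_pow_right₀ (by norm_num) (by lia)
  · have i_ne : i ≠ 0 := by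
      rintro rfl
      simp [htb] at hbt
    rw [abs_of_nonneg (by positivity), ← pow_succ']
    exact pow_le_pow_right₀ (by norm_num) (by lia)

theorem exists_mem_intCast_mul_eq (h3 : (3 : F) ≠ 0) (hsym : A = -A)
    (hends : RunsEnd A 3) (hends' : RunsEnd A 3⁻¹) (hne : H.Nonempty)
    (hH : H ∪ -H = runTops A 3) (hb : b ∈ A) :
    ∃ t ∈ H, ∃ x : ℤ, x * (t / runScale A t) = b ∧
      |x| ≤ runScale A t ∧ (b ≠ t → b ≠ -t → 3 * |x| ≤ runScale A t) := by
  obtain rfl | hb0 := eq_or_ne b 0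
  · obtain ⟨t, ht⟩ := hne
    exact ⟨t, ht, 0, by simp, by simp, by simp⟩
  obtain ⟨t, ht, x, hxb, hx, hx'⟩ := exists_mem_runTops_intCast_mul_eq h3 hends hends' hb hb0
  rw [← hH, mem_union, mem_neg'] at ht
  obtain ht | ht := ht
  · exact ⟨t, ht, x, hxb, hx, fun hbt _ => hx' hbt⟩
  · refine ⟨-t, ht, -x, ?_⟩
    rw [runScale_neg hsym, neg_neg, abs_neg]
    exact ⟨by rw [← hxb]; push_cast; ring, hx, fun _ => hx'⟩

theorem exists_add_eq_two_mul_of_mem_runTops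
    (hmid : ∀ a ∈ A, ∃ b ∈ A, ∃ c ∈ A, b + c = 2 * a ∧ b ≠ a) (ht : t ∈ runTops A 3) :
    ∃ b ∈ A, ∃ c ∈ A, b + c = 2 * t ∧ (b ≠ t ∧ b ≠ -t) ∧ c ≠ t ∧ c ≠ -t := by
  obtain ⟨htA, h3t⟩ := mem_filter.1 ht
  obtain ⟨b, hb, c, hc, hbc, hbt⟩ := hmid t htA
  refine ⟨b, hb, c, hc, hbc, ⟨hbt, ?_⟩, ?_, ?_⟩
  · rintro rfl
    exact h3t ((by linear_combination hbc : c = 3 * t) ▸ hc)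
  · rintro rfl
    exact hbt (by linear_combination hbc)
  · rintro rfl
    exact h3t ((by linear_combination hbc : b = 3 * t) ▸ hb)

theorem exists_intCast_relation_of_mem (h3 : (3 : F) ≠ 0) (hsym : A = -A) (hends : RunsEnd A 3)
    (hends' : RunsEnd A 3⁻¹) (hne : H.Nonempty) (hH : H ∪ -H = runTops A 3)
    (hmid : ∀ a ∈ A, ∃ b ∈ A, ∃ c ∈ A, b + c = 2 * a ∧ b ≠ a) (ht : t ∈ H) :
    ∃ (j k : H) (x z : ℤ),
      |x| ≤ runScale A j ∧ (j = ⟨t, ht⟩ → 3 * |x| ≤ runScale A j) ∧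
      |z| ≤ runScale A k ∧ (k = ⟨t, ht⟩ → 3 * |z| ≤ runScale A k) ∧
      2 * t = x * (j / runScale A j : F) + z * (k / runScale A k : F) ∧
      x * (j / runScale A j : F) ≠ t := by
  obtain ⟨b, hb, c, hc, hbc, ⟨hbt, hbt'⟩, hct, hct'⟩ :=
    exists_add_eq_two_mul_of_mem_runTops hmid (hH ▸ mem_union_left _ ht)
  obtain ⟨j, hj, x, hxb, hx, hx'⟩ := exists_mem_intCast_mul_eq h3 hsym hends hends' hne hH hb
  obtain ⟨k, hk, z, hzc, hz, hz'⟩ := exists_mem_intCast_mul_eq h3 hsym hends hends' hne hH hc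
  refine ⟨⟨j, hj⟩, ⟨k, hk⟩, x, z, hx, fun hjt => ?_, hz, fun hkt => ?_, ?_, ?_⟩
  · obtain rfl : j = t := congrArg Subtype.val hjt
    exact hx' hbt hbt'
  · obtain rfl : k = t := congrArg Subtype.val hkt
    exact hz' hct hct'
  · rw [hxb, hzc, hbc]
  · rwa [hxb]

theorem three_pow_card_mul_prod_le {p : ℕ} (h3 : (3 : F) ≠ 0) (hsym : A = -A)
    (hcard : 3 ^ #A ≤ p ^ 2) (hends : RunsEnd A 3⁻¹) (hdisj : Disjoint H (-H))
    (hH : H ∪ -H = runTops A 3) :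
    3 ^ #H * ∏ t ∈ H, runScale A t ≤ p := by
  have length_pos (t : F) (ht : t ∈ H) : 0 < runLength A 3⁻¹ t := by
    have htop : t ∈ runTops A 3 := hH ▸ mem_union_left _ ht
    have htA : t ∈ A := (mem_filter.1 htop).1
    exact runLength_pos htA (hends t (ne_zero_of_mem_runTops htop))
  have sum_le : 2 * ∑ t ∈ H, runLength A 3⁻¹ t ≤ #A := by
    rw [← sum_union_neg_eq_two_mul hdisj fun _ => runLength_neg hsym, hH]
    exact sum_runLength_le_card h3
  have prod_eq : 3 ^ #H * ∏ t ∈ H, runScale A t = 3 ^ ∑ t ∈ H, runLength A 3⁻¹ t := by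
    rw [← prod_const, ← prod_mul_distrib, ← prod_pow_eq_pow_sum]
    exact prod_congr rfl fun t ht => mul_pow_sub_one (length_pos t ht).ne' 3
  exact prod_eq.trans_le (pow_le_of_two_mul_le three_pos sum_le hcard)

theorem exists_mem_forall_add_eq_two_mul_imp_eq {p : ℕ} [CharP F p] (hp : p.Prime)
    (hA : A.Nonempty) (hsym : A = -A) (hcard : 3 ^ #A ≤ p ^ 2) :
    ∃ a ∈ A, ∀ b ∈ A, ∀ c ∈ A, b + c = 2 * a → b = a := by
  by_contra! hmid
  have h5 : 5 ≤ p := five_le_of_forall_exists_add_eq_two_mul hp hA hcard hmid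
  have h2 : (2 : F) ≠ 0 := CharP.cast_ne_zero_of_ne_of_prime F Nat.prime_two (by lia)
  have h3 : (3 : F) ≠ 0 := CharP.cast_ne_zero_of_ne_of_prime F Nat.prime_three (by lia)
  have hends : RunsEnd A 3 := runsEnd_of_eq_three_or_eq_inv hp h2 h3 hsym hcard (.inl rfl)
  have hends' : RunsEnd A 3⁻¹ := runsEnd_of_eq_three_or_eq_inv hp h2 h3 hsym hcard (.inr rfl)
  obtain ⟨H, hdisj, hH⟩ := exists_disjoint_neg_union_neg_eq (runTops_eq_neg (g := 3) hsym)
    fun t ht => ne_neg_of_ne_zero h2 (ne_zero_of_mem_runTops ht)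
  have hHne : H.Nonempty := by
    have two_lt_card := two_lt_card_of_forall_exists_add_eq_two_mul h2 hA hmid
    obtain ⟨a, ha, ha0⟩ := exists_mem_ne (one_lt_two.trans two_lt_card) 0
    obtain ⟨t, ht, -⟩ := exists_mem_runTops_eq_pow_mul h3 hends hends' ha ha0
    rw [← hH, mem_union, mem_neg'] at ht
    exact ht.elim (⟨_, ·⟩) (⟨_, ·⟩)
  have relation (t : H) := exists_intCast_relation_of_mem h3 hsym hends hends' hHne hH hmid t.2
  choose j k x z hx hx' hz hz' h hne using relation
  have : Nonempty H := hHne.to_subtype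
  obtain ⟨t, ht⟩ := exists_mul_eq_of_two_mul_eq_add p (d := fun t : H => runScale A t)
    (fun t => pow_ne_zero _ three_ne_zero)
    (by
      rw [Fintype.card_coe, prod_coe_sort H fun t => runScale A t]
      exact three_pow_card_mul_prod_le h3 hsym hcard hends' hdisj hH)
    (fun t => (t / runScale A t : F)) hx hx' hz hz'
    (fun t => by rw [mul_div_cancel₀ _ (natCast_runScale_ne_zero h3)]; exact h t)
  exact hne t (ht.trans (mul_div_cancel₀ _ (natCast_runScale_ne_zero h3)))

end Three

theorem three_pow_le_sq_of_le_two_mul_logb {p n : ℕ} (hp : 0 < p)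
    (h : (n : ℝ) ≤ 2 * Real.logb 3 p) : 3 ^ n ≤ p ^ 2 := by
  have hp' : (0 : ℝ) < p ^ 2 := by positivity
  have : (n : ℝ) ≤ Real.logb 3 (p ^ 2) := by rw [Real.logb_pow]; exact_mod_cast h
  rw [Real.le_logb_iff_rpow_le (by norm_num) hp', Real.rpow_natCast] at this
  exact_mod_cast this

theorem g_ge_two_log_three_general {F : Type*} [Field F] [DecidableEq F] (p : ℕ) [CharP F p]
    (hp : p.Prime) (A : Finset F) (hA : A.Nonempty) (hsym : A = -A)
    (hcard : (#A : ℝ) ≤ 2 * Real.logb 3 p) :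
    ∃ x : F, #{ab ∈ A ×ˢ A | ab.1 - ab.2 = x} = 1 := by
  obtain ⟨a, ha, unique⟩ := exists_mem_forall_add_eq_two_mul_imp_eq hp hA hsym
    (three_pow_le_sq_of_le_two_mul_logb hp.pos hcard)
  refine ⟨2 * a, card_eq_one.2 ⟨(a, -a), ?_⟩⟩
  ext ⟨b, c⟩
  simp only [mem_filter, mem_product, mem_singleton, Prod.mk.injEq]
  constructor
  · rintro ⟨⟨hb, hc⟩, hbc⟩
    have hba : b = a := unique b hb (-c) ((neg_mem_iff_of_eq_neg hsym).2 hc) (by rw [← hbc]; ring)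
    exact ⟨hba, by linear_combination hba - hbc⟩
  · rintro ⟨rfl, rfl⟩
    exact ⟨⟨ha, (neg_mem_iff_of_eq_neg hsym).2 ha⟩, by ring⟩

/-- For every prime `p`, every nonempty symmetric subset `A` of `𝔽_p` with
`|A| ≤ 2·log₃(p)` has a unique difference, i.e. `g(p) ≥ 2 log₃ p`. -/
theorem g_ge_two_log_three (p : ℕ) (hp : p.Prime)
    (A : Finset (ZMod p)) (hA : A.Nonempty) (hsym : A = -A)
    (hcard : (A.card : ℝ) ≤ 2 * Real.logb 3 p) :
    HasUniqueDifference A := by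
  have : Fact p.Prime := ⟨hp⟩
  exact g_ge_two_log_three_general p hp A hA hsym hcard
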